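/- A topological space X is both functional Alexandroff and uniformizable if and only if there exists a self-map f : X → X such that every point of X is a periodic point of f (Per(f) = X) and the topology of X equals the functional Alexandroff topology corresponding to f. -/

import Mathlib

open Set

variable {X : Type*}

/-- A topological space is uniformizable if its topology is induced by some
uniform structure. -/
def Uniformizable (X : Type*) [t : TopologicalSpace X] : Prop :=
  ∃ u : UniformSpace X, u.toTopologicalSpace = t

/-- `Vf f a = ⋃ₙ f⁻ⁿ(a)` : the union of the preimages of `{a}` under all
iterates of `f` (including the 0-th iterate). -/
def Vf (f : X → X) (a : X) : Set X :=
  ⋃ n : ℕ, (f^[n]) ⁻¹' {a}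

/-- The functional Alexandroff topology on `X` corresponding to `f`, generated
by the basis `{Vf f a : a ∈ X}`. -/
def funcAlexTop (f : X → X) : TopologicalSpace X :=
  TopologicalSpace.generateFrom {S : Set X | ∃ a : X, S = Vf f a}

/-- A topological space is functional Alexandroff if its topology is the
functional Alexandroff topology corresponding to some self-map. -/
def IsFunctionalAlexandroff (X : Type*) [t : TopologicalSpace X] : Prop :=
  ∃ f : X → X, t = funcAlexTop f

/-!
In `funcAlexTop f` the smallest neighbourhood of `a` is `Vf f a`, so the topology is
Alexandrov-discrete and `x ⤳ y` means that some iterate of `f` sends `x` to `y`. For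
Alexandrov-discrete spaces, uniformizability amounts to symmetry of specialization (the R₀ axiom):
symmetry makes every open set clopen, hence the space completely regular. Finally, reachability
under iteration of `f` is symmetric exactly when each `x` can be reached from `f x`, that is, when
each `x` is periodic.
-/

section AlexandrovDiscrete

variable [TopologicalSpace X] [AlexandrovDiscrete X]

theorem isClopen_iff_isOpen [R0Space X] {U : Set X} : IsClopen U ↔ IsOpen U := by
  refine ⟨IsClopen.isOpen, fun hU => ⟨isOpen_compl_iff.1 ?_, hU⟩⟩
  exact isOpen_iff_forall_specializes.2 fun x y hxy hy hx => hy (hxy.symm.mem_open hU hx)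

theorem completelyRegularSpace_iff_r0Space : CompletelyRegularSpace X ↔ R0Space X := by
  refine ⟨fun _ => inferInstance, fun _ => .of_isTopologicalBasis_clopens ?_⟩
  simpa only [isClopen_iff_isOpen] using TopologicalSpace.isTopologicalBasis_opens (α := X)

theorem uniformizable_iff_r0Space : Uniformizable X ↔ R0Space X :=
  completelyRegularSpace_iff_exists_uniformSpace.symm.trans completelyRegularSpace_iff_r0Space

end AlexandrovDiscrete

section FuncAlexTop

open Filter Function Topology

variable {f : X → X} {a b x y : X}

theorem mem_Vf : x ∈ Vf f a ↔ ∃ n : ℕ, f^[n] x = a := by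
  simp only [Vf, mem_iUnion, mem_preimage, mem_singleton_iff]

theorem self_mem_Vf (f : X → X) (a : X) : a ∈ Vf f a :=
  mem_Vf.2 ⟨0, rfl⟩

theorem Vf_subset_Vf (ha : a ∈ Vf f b) : Vf f a ⊆ Vf f b := by
  intro x hx
  obtain ⟨m, rfl⟩ := mem_Vf.1 hx
  obtain ⟨n, rfl⟩ := mem_Vf.1 ha
  exact mem_Vf.2 ⟨n + m, iterate_add_apply f n m x⟩

variable [t : TopologicalSpace X]

theorem nhds_eq_principal_Vf (ht : t = funcAlexTop f) (a : X) : 𝓝 a = 𝓟 (Vf f a) := by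
  subst ht
  rw [funcAlexTop, TopologicalSpace.nhds_generateFrom]
  refine le_antisymm (iInf₂_le (Vf f a) ⟨self_mem_Vf f a, a, rfl⟩) (le_iInf₂ ?_)
  rintro _ ⟨ha, b, rfl⟩
  exact principal_mono.2 (Vf_subset_Vf ha)

theorem alexandrovDiscrete_of_eq_funcAlexTop (ht : t = funcAlexTop f) : AlexandrovDiscrete X :=
  alexandrovDiscrete_iff_nhds.2 fun a => by
    rw [nhdsKer_singleton_eq_ker_nhds, nhds_eq_principal_Vf ht, ker_principal]

theorem specializes_iff_exists_iterate_eq (ht : t = funcAlexTop f) :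
    x ⤳ y ↔ ∃ n : ℕ, f^[n] x = y := by
  rw [specializes_iff_pure, nhds_eq_principal_Vf ht, pure_le_principal, mem_Vf]

theorem r0Space_iff_forall_mem_periodicPts (ht : t = funcAlexTop f) :
    R0Space X ↔ ∀ x, x ∈ periodicPts f := by
  constructor
  · intro _ x
    have hx : x ⤳ f x := (specializes_iff_exists_iterate_eq ht).2 ⟨1, rfl⟩
    obtain ⟨n, hn⟩ := (specializes_iff_exists_iterate_eq ht).1 hx.symm
    exact mk_mem_periodicPts n.succ_pos hn
  · refine fun hper => ⟨⟨fun x y hxy => ?_⟩⟩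
    obtain ⟨n, rfl⟩ := (specializes_iff_exists_iterate_eq ht).1 hxy
    obtain ⟨m, hm, hx⟩ := hper x
    refine (specializes_iff_exists_iterate_eq ht).2 ⟨n * m - n, ?_⟩
    rw [← iterate_add_apply, Nat.sub_add_cancel (Nat.le_mul_of_pos_right n hm)]
    exact hx.const_mul n

theorem uniformizable_iff_forall_mem_periodicPts (ht : t = funcAlexTop f) :
    Uniformizable X ↔ ∀ x, x ∈ periodicPts f := by
  have := alexandrovDiscrete_of_eq_funcAlexTop ht
  exact uniformizable_iff_r0Space.trans (r0Space_iff_forall_mem_periodicPts ht)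

end FuncAlexTop

/-- `X` is both functional Alexandroff and uniformizable iff there is a
self-map `f : X → X` all of whose points are periodic (`Per f = X`) such that
the topology of `X` is the functional Alexandroff topology corresponding to `f`. -/
theorem stmt12 [t : TopologicalSpace X] :
    (IsFunctionalAlexandroff X ∧ Uniformizable X) ↔
      ∃ f : X → X, (∀ x : X, ∃ n : ℕ, 0 < n ∧ f^[n] x = x) ∧
        t = funcAlexTop f := by
  constructor
  · rintro ⟨⟨f, hf⟩, hX⟩
    exact ⟨f, (uniformizable_iff_forall_mem_periodicPts hf).1 hX, hf⟩
  · rintro ⟨f, hper, hf⟩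
    exact ⟨⟨f, hf⟩, (uniformizable_iff_forall_mem_periodicPts hf).2 hper⟩
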